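/- Let n ≥ 3, let r ≥ 2, and let n = n₁ + ⋯ + n_r be an ordered partition of n into positive integers; let k ≥ 1. Partition the index set {1,…,n} into consecutive blocks B₁,…,B_r of sizes n₁,…,n_r. Let U_Q⁺(kℤ) be the set of matrices in SL_n(ℤ) of the form I + X where X i j = 0 unless i ∈ B_s and j ∈ B_t with s < t, and all entries of X are divisible by k; let U_Q⁻(kℤ) be the analogous set with s > t. Then the subgroup of SL_n(ℤ) generated by U_Q⁺(kℤ) and U_Q⁻(kℤ) has finite index in SL_n(ℤ). -/

import Mathlib

/-!
Write `E(I)` for the group generated by the elementary matrices with entries in an ideal `I`.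
Commutators of elementary matrices across different blocks produce those inside a block, so the
group generated by the two unipotent radicals of level `k` contains `E(I)` for `I = (k²)`, and it
suffices that `E(I)` has finite index.

Every conjugate of an elementary matrix is `1 + u vᵀ` with `u` unimodular and `v ⬝ᵥ u = 0`, and
hence `v` is a sum of Koszul vectors `u_k e_j - u_j e_k`. In dimension at least three such a vector
vanishes at some index `l`, and then (Suslin) `1 + u vᵀ` is, up to an elementary factor, a
commutator of a matrix supported on column `l` and one supported on row `l`. This has two
consequences for the normal closure `N` of `E(I²)`. First, `N` is contained in `E(I)`. Second, the
class of `A T A⁻¹` modulo `N`, for `T` elementary, depends only on `A` modulo `I²`; so the principal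
congruence subgroup of level `I²` is central modulo `N`, because elementary matrices generate the
special linear group over a Euclidean domain. The quotient by `N` is therefore a perfect group whose
center has finite index, and it is finite by Schur's theorem on commutator subgroups.
-/

namespace ParabolicUnipotent

open scoped Matrix commutatorElement
open Matrix (vecMulVec)
open Matrix.SpecialLinearGroup (transvection transvection_coe coe_mul coe_one)

variable {ι R : Type*} [Fintype ι] [DecidableEq ι] [CommRing R]

open scoped Classical in
/-- The unipotent matrix `1 + u vᵀ` with `v ⬝ᵥ u = 0`, as an element of the special linear group.
The value is `1` when `v ⬝ᵥ u ≠ 0`. -/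
noncomputable def transvec (u v : ι → R) : Matrix.SpecialLinearGroup ι R :=
  if h : v ⬝ᵥ u = 0 then
    ⟨1 + vecMulVec u v, by
      rw [Matrix.vecMulVec_eq Unit, Matrix.det_one_add_replicateCol_mul_replicateRow, h, add_zero]⟩
  else 1

lemma coe_transvec {u v : ι → R} (h : v ⬝ᵥ u = 0) :
    (transvec u v : Matrix ι ι R) = 1 + vecMulVec u v := by
  simp [transvec, h]

lemma transvec_single_single {i j : ι} (hij : i ≠ j) (a b : R) :
    transvec (Pi.single i a) (Pi.single j b) = transvection hij (a * b) := by
  apply Subtype.ext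
  rw [coe_transvec (by simp [hij]), transvection_coe]
  ext p q
  simp [Matrix.vecMulVec_apply, Matrix.single_apply, Pi.single_apply, ← ite_and, eq_comm, and_comm]

@[simp]
lemma transvec_zero_left (v : ι → R) : transvec 0 v = 1 := by
  apply Subtype.ext
  simp [coe_transvec]

@[simp]
lemma transvec_zero_right (u : ι → R) : transvec u 0 = 1 := by
  apply Subtype.ext
  simp [coe_transvec]

lemma transvec_add_left {u u' v : ι → R} (h : v ⬝ᵥ u = 0) (h' : v ⬝ᵥ u' = 0) :
    transvec (u + u') v = transvec u v * transvec u' v := by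
  apply Subtype.ext
  rw [coe_mul, coe_transvec (by simp [dotProduct_add, h, h']), coe_transvec h, coe_transvec h']
  simp only [mul_add, add_mul, mul_one, one_mul, Matrix.vecMulVec_mul_vecMulVec, h', zero_smul,
    Matrix.vecMulVec_zero, Matrix.add_vecMulVec]
  abel

lemma transvec_add_right {u v v' : ι → R} (h : v ⬝ᵥ u = 0) (h' : v' ⬝ᵥ u = 0) :
    transvec u (v + v') = transvec u v * transvec u v' := by
  apply Subtype.ext
  rw [coe_mul, coe_transvec (by simp [add_dotProduct, h, h']), coe_transvec h, coe_transvec h']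
  simp only [mul_add, add_mul, mul_one, one_mul, Matrix.vecMulVec_mul_vecMulVec, h, zero_smul,
    Matrix.vecMulVec_zero, Matrix.vecMulVec_add]
  abel

lemma transvec_smul_left {u v : ι → R} (h : v ⬝ᵥ u = 0) (c : R) :
    transvec (c • u) v = transvec u (c • v) := by
  apply Subtype.ext
  rw [coe_transvec (by simp [h]), coe_transvec (by simp [h]), Matrix.smul_vecMulVec,
    Matrix.vecMulVec_smul]

lemma map_sum_eq_prod_of_forall_mem {M G κ : Type*} [AddCommMonoid M] [Monoid G]
    (S : AddSubmonoid M) {F : M → G} (hzero : F 0 = 1)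
    (hadd : ∀ x ∈ S, ∀ y ∈ S, F (x + y) = F x * F y) {s : Finset κ} {x : κ → M}
    (hx : ∀ k ∈ s, x k ∈ S) : F (∑ k ∈ s, x k) = (s.toList.map fun k => F (x k)).prod := by
  suffices ∀ l : List κ, (∀ k ∈ l, x k ∈ S) →
      F (l.map x).sum = (l.map fun k => F (x k)).prod by
    simpa using this s.toList (by simpa using hx)
  intro l hl
  induction l with
  | nil => simpa using hzero
  | cons k l ih =>
    obtain ⟨hk, hl⟩ := List.forall_mem_cons.mp hl
    have hsum : (l.map x).sum ∈ S := S.list_sum_mem (by simpa using hl)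
    simp [hadd _ hk _ hsum, ih hl]

lemma transvec_sum_left {κ : Type*} {s : Finset κ} {u : κ → ι → R} {v : ι → R}
    (h : ∀ k ∈ s, v ⬝ᵥ u k = 0) :
    transvec (∑ k ∈ s, u k) v = (s.toList.map fun k => transvec (u k) v).prod :=
  map_sum_eq_prod_of_forall_mem (dotProductBilin R R v).ker.toAddSubmonoid
    (F := (transvec · v)) (transvec_zero_left v) (fun _ h _ h' => transvec_add_left h h') h

lemma transvec_sum_right {κ : Type*} {s : Finset κ} {u : ι → R} {v : κ → ι → R}
    (h : ∀ k ∈ s, v k ⬝ᵥ u = 0) :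
    transvec u (∑ k ∈ s, v k) = (s.toList.map fun k => transvec u (v k)).prod :=
  map_sum_eq_prod_of_forall_mem ((dotProductBilin R R).flip u).ker.toAddSubmonoid
    (transvec_zero_right u) (fun _ h _ h' => transvec_add_right h h') h

lemma vecMul_inv_dotProduct_mulVec (g : Matrix.SpecialLinearGroup ι R) (u v : ι → R) :
    (v ᵥ* g⁻¹.1) ⬝ᵥ (g.1 *ᵥ u) = v ⬝ᵥ u := by
  rw [← Matrix.dotProduct_mulVec, Matrix.mulVec_mulVec, ← coe_mul, inv_mul_cancel, coe_one,
    Matrix.one_mulVec]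

lemma conj_transvec (g : Matrix.SpecialLinearGroup ι R) {u v : ι → R} (h : v ⬝ᵥ u = 0) :
    g * transvec u v * g⁻¹ = transvec (g.1 *ᵥ u) (v ᵥ* g⁻¹.1) := by
  rw [mul_inv_eq_iff_eq_mul]
  apply Subtype.ext
  rw [coe_mul, coe_mul, coe_transvec h, coe_transvec (by rw [vecMul_inv_dotProduct_mulVec, h]),
    mul_add, add_mul, mul_one, one_mul, Matrix.mul_vecMulVec, Matrix.vecMulVec_mul,
    Matrix.vecMul_vecMul, ← coe_mul, inv_mul_cancel, coe_one, Matrix.vecMul_one]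

lemma conj_transvection (g : Matrix.SpecialLinearGroup ι R) {i j : ι} (hij : i ≠ j) (a : R) :
    g * transvection hij a * g⁻¹ = transvec (g.1 *ᵥ Pi.single i 1)
      (Pi.single j a ᵥ* g⁻¹.1) := by
  rw [← conj_transvec g (by simp [hij.symm]), transvec_single_single hij, one_mul]

lemma commutatorElement_transvec {u v : ι → R} {l : ι} (h : v ⬝ᵥ u = 0) (hu : u l = 0)
    (hv : v l = 0) :
    ⁅transvec u (Pi.single l 1), transvec (Pi.single l 1) v⁆ = transvec u v := by
  rw [commutatorElement_def, mul_inv_eq_iff_eq_mul, mul_inv_eq_iff_eq_mul]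
  apply Subtype.ext
  simp only [coe_mul]
  rw [coe_transvec h, coe_transvec (by simpa), coe_transvec (by simpa)]
  simp only [mul_add, add_mul, mul_one, one_mul, Matrix.vecMulVec_mul_vecMulVec,
    dotProduct_single, Pi.single_eq_same, h, hv, one_smul, zero_smul, Matrix.vecMulVec_zero,
    add_zero]
  abel

lemma commutatorElement_transvection {i j l : ι} (hil : i ≠ l) (hlj : l ≠ j) (hij : i ≠ j)
    (a b : R) :
    ⁅transvection hil a, transvection hlj b⁆ = transvection hij (a * b) := by
  simpa [transvec_single_single, hil, hlj, hij] using
    commutatorElement_transvec (u := Pi.single i a) (v := Pi.single j b) (l := l)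
      (by simp [hij]) (by simp [hil.symm]) (by simp [hlj])

lemma dotProduct_update_of_apply_eq_zero {u x : ι → R} {l : ι} (hx : x l = 0) (a : R) :
    x ⬝ᵥ Function.update u l a = x ⬝ᵥ u := by
  refine Finset.sum_congr rfl fun i _ => ?_
  rcases eq_or_ne i l with rfl | hi <;> simp [*]

lemma transvec_eq_update_mul {u x : ι → R} {l : ι} (h : x ⬝ᵥ u = 0) (hx : x l = 0) :
    transvec u x = transvec (Function.update u l 0) x * transvec (Pi.single l 1) (u l • x) := by
  have hu : u = Function.update u l 0 + u l • Pi.single l 1 := by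
    ext p
    by_cases hp : p = l <;> simp [hp]
  have hs : x ⬝ᵥ Pi.single l 1 = 0 := by simpa
  have h0 : x ⬝ᵥ Function.update u l 0 = 0 := by rw [dotProduct_update_of_apply_eq_zero hx, h]
  conv_lhs => rw [hu]
  rw [transvec_add_left h0 (by simp [hs]), transvec_smul_left hs]

/-- The Koszul vector `u_k e_j - u_j e_k`, the universal solution of `v ⬝ᵥ u = 0` supported on
the two indices `j` and `k`. -/
def koszul (u : ι → R) (j k : ι) : ι → R :=
  Pi.single j (u k) - Pi.single k (u j)

lemma koszul_dotProduct_self (u : ι → R) (j k : ι) : koszul u j k ⬝ᵥ u = 0 := by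
  simp [koszul, sub_dotProduct, mul_comm]

lemma exists_ne_ne {α : Type*} [Fintype α] (hα : 3 ≤ Fintype.card α) (j k : α) :
    ∃ l, l ≠ j ∧ l ≠ k := by
  classical
  obtain ⟨l, -, hl⟩ : ∃ l ∈ Finset.univ, l ∉ ({j, k} : Finset α) :=
    Finset.exists_mem_notMem_of_card_lt_card (Finset.card_le_two.trans_lt hα)
  exact ⟨l, by simpa using hl⟩

lemma exists_koszul_apply_eq_zero (hι : 3 ≤ Fintype.card ι) (j k : ι) :
    ∃ l, ∀ u : ι → R, koszul u j k l = 0 := by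
  obtain ⟨l, hj, hk⟩ := exists_ne_ne hι j k
  exact ⟨l, fun u => by simp [koszul, hj, hk]⟩

lemma eq_sum_koszul {u v w : ι → R} (hw : w ⬝ᵥ u = 1) (hv : v ⬝ᵥ u = 0) :
    v = ∑ p : ι × ι, (v p.1 * w p.2) • koszul u p.1 p.2 := by
  have hw' (i : ι) : ∑ k, v i * w k * u k = v i := by
    simpa [dotProduct, Finset.mul_sum, mul_assoc] using congrArg (v i * ·) hw
  have hv' (i : ι) : ∑ j, v j * w i * u j = 0 := by
    simpa [dotProduct, Finset.sum_mul, mul_right_comm] using congrArg (· * w i) hv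
  ext i
  simp [koszul, Fintype.sum_prod_type, Pi.single_apply, mul_sub, hw', hv']

/-! ### Elementary subgroups -/

variable (ι) in
/-- The subgroup `E(I)` of the special linear group generated by the elementary matrices
`1 + a E_{ij}` with `i ≠ j` and `a ∈ I`. -/
def elementarySubgroup (I : Ideal R) : Subgroup (Matrix.SpecialLinearGroup ι R) :=
  Subgroup.closure {g | ∃ (i j : ι) (hij : i ≠ j), ∃ a ∈ I, transvection hij a = g}

lemma transvection_mem_elementarySubgroup {I : Ideal R} {i j : ι} (hij : i ≠ j) {a : R}
    (ha : a ∈ I) : transvection hij a ∈ elementarySubgroup ι I :=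
  Subgroup.subset_closure ⟨i, j, hij, a, ha, rfl⟩

lemma elementarySubgroup_le_iff {I : Ideal R} {H : Subgroup (Matrix.SpecialLinearGroup ι R)} :
    elementarySubgroup ι I ≤ H ↔ ∀ (i j : ι) (hij : i ≠ j), ∀ a ∈ I, transvection hij a ∈ H := by
  rw [elementarySubgroup, Subgroup.closure_le]
  exact ⟨fun h i j hij a ha => h ⟨i, j, hij, a, ha, rfl⟩,
    fun h _ ⟨i, j, hij, a, ha, hg⟩ => hg ▸ h i j hij a ha⟩

lemma transvec_single_left_mem {I : Ideal R} {l : ι} {x : ι → R} (hl : x l = 0)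
    (hx : ∀ j, x j ∈ I) : transvec (Pi.single l 1) x ∈ elementarySubgroup ι I := by
  have hdot (j : ι) : Pi.single j (x j) ⬝ᵥ Pi.single l 1 = 0 := by
    rcases eq_or_ne j l with rfl | hj <;> simp [*]
  rw [← Finset.univ_sum_single x, transvec_sum_right fun j _ => hdot j]
  refine Subgroup.list_prod_mem _ (List.forall_mem_map.mpr fun j _ => ?_)
  rcases eq_or_ne l j with rfl | hj
  · simp [hl]
  · simpa [transvec_single_single hj] using transvection_mem_elementarySubgroup hj (hx j)

lemma transvec_single_right_mem {I : Ideal R} {l : ι} {y : ι → R} (hl : y l = 0)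
    (hy : ∀ i, y i ∈ I) : transvec y (Pi.single l 1) ∈ elementarySubgroup ι I := by
  have hdot (i : ι) : Pi.single l 1 ⬝ᵥ Pi.single i (y i) = 0 := by
    rcases eq_or_ne i l with rfl | hi <;> simp [*]
  rw [← Finset.univ_sum_single y, transvec_sum_left fun i _ => hdot i]
  refine Subgroup.list_prod_mem _ (List.forall_mem_map.mpr fun i _ => ?_)
  rcases eq_or_ne i l with rfl | hi
  · simp [hl]
  · simpa [transvec_single_single hi] using transvection_mem_elementarySubgroup hi (hy i)

-- Suslin's trick: an index `l` with `x l = 0` splits the transvection, up to a row operation, as a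
-- commutator of a column and a row operation, each of which absorbs one of the factors `a`, `b`.
lemma transvec_mul_smul_mem {I : Ideal R} {a b : R} (ha : a ∈ I) (hb : b ∈ I) {u x : ι → R} {l : ι}
    (h : x ⬝ᵥ u = 0) (hl : x l = 0) : transvec u ((a * b) • x) ∈ elementarySubgroup ι I := by
  set u' := Function.update u l 0 with hu'
  have hrow {c : R} (hc : c ∈ I) : transvec (Pi.single l 1) (c • x) ∈ elementarySubgroup ι I :=
    transvec_single_left_mem (by simp [hl]) fun j => I.mul_mem_right (x j) hc
  have hcol : transvec (a • u') (Pi.single l 1) ∈ elementarySubgroup ι I :=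
    transvec_single_right_mem (by simp [hu']) fun i => I.mul_mem_right (u' i) ha
  have h' : x ⬝ᵥ u' = 0 := by rw [dotProduct_update_of_apply_eq_zero hl, h]
  rw [transvec_eq_update_mul (l := l) (by simp [h]) (by simp [hl]), smul_smul]
  refine mul_mem ?_ (hrow (I.mul_mem_left _ (I.mul_mem_right _ ha)))
  rw [mul_smul, ← transvec_smul_left (by simp [← hu', h']),
    ← commutatorElement_transvec (l := l) (by simp [← hu', h']) (by simp) (by simp [hl])]
  exact Subgroup.commutator_le_self _ (Subgroup.commutator_mem_commutator hcol (hrow hb))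

lemma transvec_mem_of_unimodular (hι : 3 ≤ Fintype.card ι) {I : Ideal R} {u v w : ι → R}
    (hw : w ⬝ᵥ u = 1) (hv : v ⬝ᵥ u = 0) (hvI : ∀ j, v j ∈ I * I) :
    transvec u v ∈ elementarySubgroup ι I := by
  have hterm (c : R) (hc : c ∈ I * I) (j k : ι) :
      transvec u (c • koszul u j k) ∈ elementarySubgroup ι I := by
    obtain ⟨l, hl⟩ := exists_koszul_apply_eq_zero (R := R) hι j k
    induction hc using Submodule.mul_induction_on' with
    | mem_mul_mem a ha b hb =>
      exact transvec_mul_smul_mem ha hb (koszul_dotProduct_self u j k) (hl u)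
    | add c _ d _ hc hd =>
      rw [add_smul, transvec_add_right (by simp [koszul_dotProduct_self])
        (by simp [koszul_dotProduct_self])]
      exact mul_mem hc hd
  rw [eq_sum_koszul hw hv, transvec_sum_right fun p _ => by simp [koszul_dotProduct_self]]
  refine Subgroup.list_prod_mem _ (List.forall_mem_map.mpr fun p _ => ?_)
  exact hterm _ (Ideal.mul_mem_right _ _ (hvI p.1)) p.1 p.2

lemma conj_mem_elementarySubgroup (hι : 3 ≤ Fintype.card ι) {I : Ideal R}
    (g : Matrix.SpecialLinearGroup ι R) {h : Matrix.SpecialLinearGroup ι R}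
    (hh : h ∈ elementarySubgroup ι (I * I)) : g * h * g⁻¹ ∈ elementarySubgroup ι I := by
  suffices elementarySubgroup ι (I * I) ≤
      (elementarySubgroup ι I).comap (MulAut.conj g).toMonoidHom from this hh
  refine elementarySubgroup_le_iff.mpr fun i j hij a ha => ?_
  have hw : (Pi.single i 1 ᵥ* g⁻¹.1) ⬝ᵥ (g.1 *ᵥ Pi.single i 1) = 1 := by
    rw [vecMul_inv_dotProduct_mulVec]
    simp
  have hv : (Pi.single j a ᵥ* g⁻¹.1) ⬝ᵥ (g.1 *ᵥ Pi.single i 1) = 0 := by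
    rw [vecMul_inv_dotProduct_mulVec]
    simp [hij.symm]
  have hvI (k : ι) : (Pi.single j a ᵥ* g⁻¹.1) k ∈ I * I := by
    rw [Matrix.single_vecMul]
    exact Ideal.mul_mem_right _ _ ha
  simpa [conj_transvection] using transvec_mem_of_unimodular hι hw hv hvI

lemma normalClosure_elementarySubgroup_le (hι : 3 ≤ Fintype.card ι) (I : Ideal R) :
    Subgroup.normalClosure (elementarySubgroup ι (I * I) : Set _) ≤ elementarySubgroup ι I := by
  rw [Subgroup.normalClosure, Subgroup.closure_le]
  intro _ hconj
  obtain ⟨h, hh, hconj⟩ := Group.mem_conjugatesOfSet_iff.mp hconj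
  obtain ⟨g, rfl⟩ := isConj_iff.mp hconj
  exact conj_mem_elementarySubgroup hι g hh

/-! ### Congruence subgroups act centrally -/

section Congruence

variable {S G : Type*} [CommRing S] [Group G] {f : R →+* S}
  {φ : Matrix.SpecialLinearGroup ι R →* G}

lemma map_transvec_single_left_congr (hφ : elementarySubgroup ι (RingHom.ker f) ≤ φ.ker) {l : ι}
    {x x' : ι → R} (hx : x l = 0) (hx' : x' l = 0) (hf : ∀ j, f (x j) = f (x' j)) :
    φ (transvec (Pi.single l 1) x) = φ (transvec (Pi.single l 1) x') := by
  have hmem : transvec (Pi.single l 1) (x - x') ∈ φ.ker :=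
    hφ (transvec_single_left_mem (by simp [hx, hx']) fun j => by simp [RingHom.mem_ker, hf])
  rw [← sub_add_cancel x x', transvec_add_right (by simp [hx, hx']) (by simp [hx']), map_mul,
    MonoidHom.mem_ker.mp hmem, one_mul]

lemma map_transvec_single_right_congr (hφ : elementarySubgroup ι (RingHom.ker f) ≤ φ.ker) {l : ι}
    {y y' : ι → R} (hy : y l = 0) (hy' : y' l = 0) (hf : ∀ i, f (y i) = f (y' i)) :
    φ (transvec y (Pi.single l 1)) = φ (transvec y' (Pi.single l 1)) := by
  have hmem : transvec (y - y') (Pi.single l 1) ∈ φ.ker :=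
    hφ (transvec_single_right_mem (by simp [hy, hy']) fun j => by simp [RingHom.mem_ker, hf])
  rw [← sub_add_cancel y y', transvec_add_left (by simp [hy, hy']) (by simp [hy']), map_mul,
    MonoidHom.mem_ker.mp hmem, one_mul]

lemma map_transvec_congr_of_apply_eq_zero (hφ : elementarySubgroup ι (RingHom.ker f) ≤ φ.ker)
    {u u' x x' : ι → R} {l : ι} (h : x ⬝ᵥ u = 0) (h' : x' ⬝ᵥ u' = 0) (hx : x l = 0)
    (hx' : x' l = 0) (hu : ∀ i, f (u i) = f (u' i)) (hfx : ∀ j, f (x j) = f (x' j)) :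
    φ (transvec u x) = φ (transvec u' x') := by
  have hsplit {u x : ι → R} (h : x ⬝ᵥ u = 0) (hx : x l = 0) :
      φ (transvec u x) = ⁅φ (transvec (Function.update u l 0) (Pi.single l 1)),
        φ (transvec (Pi.single l 1) x)⁆ * φ (transvec (Pi.single l 1) (u l • x)) := by
    rw [transvec_eq_update_mul h hx, map_mul, ← map_commutatorElement, commutatorElement_transvec
      (by rw [dotProduct_update_of_apply_eq_zero hx, h]) (by simp) hx]
  have hupdate (i : ι) : f (Function.update u l 0 i) = f (Function.update u' l 0 i) := by
    rcases eq_or_ne i l with rfl | hi <;> simp [*]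
  rw [hsplit h hx, hsplit h' hx', map_transvec_single_left_congr hφ hx hx' hfx,
    map_transvec_single_right_congr hφ (by simp) (by simp) hupdate,
    map_transvec_single_left_congr hφ (x := u l • x) (x' := u' l • x') (by simp [hx])
      (by simp [hx']) (by simp [hu, hfx])]

-- The coefficients in `eq_sum_koszul` are polynomial in `u`, `v`, `w`, so congruent data give
-- termwise congruent decompositions.
lemma map_transvec_congr (hι : 3 ≤ Fintype.card ι)
    (hφ : elementarySubgroup ι (RingHom.ker f) ≤ φ.ker) {u u' v v' w w' : ι → R}
    (hw : w ⬝ᵥ u = 1) (hw' : w' ⬝ᵥ u' = 1) (hv : v ⬝ᵥ u = 0) (hv' : v' ⬝ᵥ u' = 0)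
    (hfu : ∀ i, f (u i) = f (u' i)) (hfv : ∀ i, f (v i) = f (v' i))
    (hfw : ∀ i, f (w i) = f (w' i)) : φ (transvec u v) = φ (transvec u' v') := by
  have hterm (j k : ι) : φ (transvec u ((v j * w k) • koszul u j k)) =
      φ (transvec u' ((v' j * w' k) • koszul u' j k)) := by
    obtain ⟨l, hl⟩ := exists_koszul_apply_eq_zero (R := R) hι j k
    refine map_transvec_congr_of_apply_eq_zero hφ (l := l) (by simp [koszul_dotProduct_self])
      (by simp [koszul_dotProduct_self]) (by simp [hl]) (by simp [hl]) hfu fun i => ?_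
    simp [koszul, Pi.single_apply, apply_ite f, hfu, hfv, hfw]
  rw [eq_sum_koszul hw hv, eq_sum_koszul hw' hv',
    transvec_sum_right fun p _ => by simp [koszul_dotProduct_self],
    transvec_sum_right fun p _ => by simp [koszul_dotProduct_self], map_list_prod, map_list_prod,
    List.map_map, List.map_map]
  exact congrArg List.prod (List.map_congr_left fun p _ => hterm p.1 p.2)

lemma commute_map_transvection (hι : 3 ≤ Fintype.card ι)
    (hφ : elementarySubgroup ι (RingHom.ker f) ≤ φ.ker) {A : Matrix.SpecialLinearGroup ι R}
    (hA : A ∈ (Matrix.SpecialLinearGroup.map f).ker) {i j : ι} (hij : i ≠ j) (t : R) :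
    Commute (φ A) (φ (transvection hij t)) := by
  have hmap {B : Matrix.SpecialLinearGroup ι R} (hB : B ∈ (Matrix.SpecialLinearGroup.map f).ker) :
      (B : Matrix ι ι R).map f = 1 := congrArg (·.1) (MonoidHom.mem_ker.mp hB)
  have hrow (v : ι → R) (p : ι) : f ((v ᵥ* A⁻¹.1) p) = f (v p) := by
    rw [RingHom.map_vecMul, hmap (inv_mem hA), Matrix.vecMul_one, Function.comp_apply]
  have hcol (u : ι → R) (p : ι) : f ((A.1 *ᵥ u) p) = f (u p) := by
    rw [RingHom.map_mulVec, hmap hA, Matrix.one_mulVec, Function.comp_apply]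
  have hconj : φ (A * transvection hij t * A⁻¹) = φ (transvection hij t) := by
    rw [conj_transvection, ← one_mul t, ← transvec_single_single, one_mul]
    exact map_transvec_congr hι hφ (w := Pi.single i 1 ᵥ* A⁻¹.1)
      (w' := Pi.single i 1) (by rw [vecMul_inv_dotProduct_mulVec]; simp) (by simp)
      (by rw [vecMul_inv_dotProduct_mulVec]; simp [hij.symm]) (by simp [hij.symm])
      (hcol _) (hrow _) (hrow _)
  rwa [map_mul, map_mul, map_inv, mul_inv_eq_iff_eq_mul] at hconj

end Congruence

/-! ### Finite index from Schur's theorem -/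

section Schur

variable {G : Type*} [Group G]

lemma commutatorElement_mul_left_of_mem_center {z : G} (hz : z ∈ Subgroup.center G) (g h : G) :
    ⁅g * z, h⁆ = ⁅g, h⁆ := by
  have hcomm := Subgroup.mem_center_iff.mp hz h
  simp only [commutatorElement_def, mul_inv_rev, mul_assoc]
  rw [← mul_assoc z h, ← hcomm, mul_assoc, mul_inv_cancel_left]

lemma commutatorElement_mul_right_of_mem_center {z : G} (hz : z ∈ Subgroup.center G) (g h : G) :
    ⁅g, h * z⁆ = ⁅g, h⁆ := by
  rw [← commutatorElement_inv, commutatorElement_mul_left_of_mem_center hz, commutatorElement_inv]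

lemma finite_commutatorSet_of_finiteIndex_center [(Subgroup.center G).FiniteIndex] :
    Finite (commutatorSet G) := by
  have hrange : commutatorSet G ⊆ Set.range fun p : (G ⧸ Subgroup.center G) ×
      (G ⧸ Subgroup.center G) => ⁅p.1.out, p.2.out⁆ := by
    rintro _ ⟨g, h, rfl⟩
    obtain ⟨y, hy⟩ := QuotientGroup.mk_out_eq_mul (Subgroup.center G) g
    obtain ⟨z, hz⟩ := QuotientGroup.mk_out_eq_mul (Subgroup.center G) h
    refine ⟨(g, h), ?_⟩
    simp only [hy, hz, commutatorElement_mul_left_of_mem_center y.2,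
      commutatorElement_mul_right_of_mem_center z.2]
  exact ((Set.finite_range _).subset hrange).to_subtype

lemma finite_of_isPerfect_of_finiteIndex_center [Group.IsPerfect G]
    [(Subgroup.center G).FiniteIndex] : Finite G := by
  have := finite_commutatorSet_of_finiteIndex_center (G := G)
  have : Finite (commutator G) := inferInstance
  rw [Group.IsPerfect.commutator_eq_top] at this
  exact Finite.of_equiv _ Subgroup.topEquiv.toEquiv

end Schur

lemma isPerfect_of_elementarySubgroup_top (hι : 3 ≤ Fintype.card ι)
    (htop : elementarySubgroup ι (⊤ : Ideal R) = ⊤) :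
    Group.IsPerfect (Matrix.SpecialLinearGroup ι R) := by
  rw [Group.isPerfect_def, eq_top_iff, ← htop]
  refine elementarySubgroup_le_iff.mpr fun i j hij a _ => ?_
  obtain ⟨l, hli, hlj⟩ := exists_ne_ne hι i j
  rw [← mul_one a, ← commutatorElement_transvection hli.symm hlj]
  exact Subgroup.commutator_mem_commutator trivial trivial

lemma map_ker_map_le_center {S G : Type*} [CommRing S] [Group G] (hι : 3 ≤ Fintype.card ι)
    (htop : elementarySubgroup ι (⊤ : Ideal R) = ⊤) {f : R →+* S}
    {φ : Matrix.SpecialLinearGroup ι R →* G} (hsurj : Function.Surjective φ)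
    (hφ : elementarySubgroup ι (RingHom.ker f) ≤ φ.ker) :
    (Matrix.SpecialLinearGroup.map f).ker.map φ ≤ Subgroup.center G := by
  rintro _ ⟨A, hA, rfl⟩
  have hcentralizer : (Subgroup.centralizer {φ A}).comap φ = ⊤ := by
    rw [eq_top_iff, ← htop]
    refine elementarySubgroup_le_iff.mpr fun i j hij t _ => ?_
    exact Subgroup.mem_centralizer_singleton_iff.mpr
      (commute_map_transvection hι hφ hA hij t).symm
  rw [Subgroup.mem_center_iff, hsurj.forall]
  intro B
  have hB : B ∈ (Subgroup.centralizer {φ A}).comap φ := hcentralizer ▸ Subgroup.mem_top B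
  exact Subgroup.mem_centralizer_singleton_iff.mp hB

theorem finiteIndex_elementarySubgroup (hι : 3 ≤ Fintype.card ι)
    (htop : elementarySubgroup ι (⊤ : Ideal R) = ⊤) (I : Ideal R) [Finite (R ⧸ I * I)] :
    (elementarySubgroup ι I).FiniteIndex := by
  set N := Subgroup.normalClosure (elementarySubgroup ι (I * I) :
    Set (Matrix.SpecialLinearGroup ι R))
  let f := Ideal.Quotient.mk (I * I)
  have hker : elementarySubgroup ι (RingHom.ker f) ≤ (QuotientGroup.mk' N).ker := by
    rw [Ideal.mk_ker, QuotientGroup.ker_mk']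
    exact Subgroup.subset_normalClosure
  have hcenter := map_ker_map_le_center hι htop (QuotientGroup.mk'_surjective N) hker
  have : ((Matrix.SpecialLinearGroup.map (n := ι) f).ker.map (QuotientGroup.mk' N)).FiniteIndex :=
    ⟨ne_zero_of_dvd_ne_zero Subgroup.FiniteIndex.index_ne_zero
      (Subgroup.index_map_dvd _ (QuotientGroup.mk'_surjective N))⟩
  have := Subgroup.finiteIndex_of_le hcenter
  have := isPerfect_of_elementarySubgroup_top hι htop
  have := finite_of_isPerfect_of_finiteIndex_center
    (G := Matrix.SpecialLinearGroup ι R ⧸ N)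
  have : N.FiniteIndex := Subgroup.finiteIndex_of_finite_quotient
  exact Subgroup.finiteIndex_of_le (normalClosure_elementarySubgroup_le hι I)

/-! ### Elementary generation over Euclidean domains -/

section EuclideanDomain

variable {T : Finset ι}

lemma transvection_smul {i j : ι} (hij : i ≠ j) (a : R) (u : ι → R) :
    transvection hij a • u = u + Pi.single i (a * u j) := by
  simp [Matrix.SpecialLinearGroup.smul_def, transvection_coe, add_smul, Matrix.smul_eq_mulVec,
    Matrix.single_mulVec_eq, ← Pi.single_smul]

lemma smul_single_one_apply (A : Matrix.SpecialLinearGroup ι R) (i j : ι) :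
    (A • (Pi.single j 1 : ι → R)) i = A.1 i j := by
  simp [Matrix.SpecialLinearGroup.smul_def, Matrix.smul_eq_mulVec]

variable (R) in
/-- The subgroup of the special linear group fixing all basis vectors `e_j` with `j ∉ T`. -/
def fixingOutside (T : Finset ι) : Subgroup (Matrix.SpecialLinearGroup ι R) :=
  fixingSubgroup _ ((fun j => Pi.single j (1 : R)) '' (T : Set ι)ᶜ)

lemma mem_fixingOutside_iff {A : Matrix.SpecialLinearGroup ι R} :
    A ∈ fixingOutside R T ↔
      ∀ j ∉ T, A • (Pi.single j 1 : ι → R) = Pi.single j 1 := by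
  simp [fixingOutside, mem_fixingSubgroup_iff]

lemma apply_eq_zero_of_mem_fixingOutside {A : Matrix.SpecialLinearGroup ι R}
    (hA : A ∈ fixingOutside R T) {s i : ι} (hs : s ∈ T) (hi : i ∉ T) : A.1 s i = 0 := by
  have hsi : s ≠ i := fun h => hi (h ▸ hs)
  rw [← smul_single_one_apply, mem_fixingOutside_iff.mp hA i hi, Pi.single_eq_of_ne hsi]

lemma transvection_mem_inf_fixingOutside {i j : ι} (hij : i ≠ j) (hj : j ∈ T) (a : R) :
    transvection hij a ∈ elementarySubgroup ι ⊤ ⊓ fixingOutside R T := by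
  refine ⟨transvection_mem_elementarySubgroup hij trivial, mem_fixingOutside_iff.mpr fun l hl => ?_⟩
  have hjl : j ≠ l := fun h => hl (h ▸ hj)
  simp [transvection_smul, hjl]

lemma isUnit_of_forall_dvd {A : Matrix.SpecialLinearGroup ι R} (hA : A ∈ fixingOutside R T) {s : ι}
    (hs : s ∈ T) {d : R} (hd : ∀ i ∈ T, d ∣ A.1 i s) : IsUnit d := by
  have hone : ∑ i, A⁻¹.1 s i * A.1 i s = 1 := by
    rw [← Matrix.mul_apply, ← coe_mul, inv_mul_cancel, coe_one, Matrix.one_apply_eq]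
  refine isUnit_of_dvd_one (hone ▸ Finset.dvd_sum fun i _ => ?_)
  by_cases hi : i ∈ T
  · exact (hd i hi).mul_left _
  · simp [apply_eq_zero_of_mem_fixingOutside (inv_mem hA) hs hi]

lemma exists_smul_eq_single {u : ι → R} {s : ι} (hs : s ∈ T) (hu : u s = 1) :
    ∃ g ∈ elementarySubgroup ι ⊤ ⊓ fixingOutside R T, g • u = Pi.single s 1 := by
  have hdot : Pi.single s 1 ⬝ᵥ (Pi.single s 1 - u) = 0 := by simp [hu]
  have hsmul (v : ι → R) :
      transvec (Pi.single s 1 - u) (Pi.single s 1) • v = v + v s • (Pi.single s 1 - u) := by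
    simp [Matrix.SpecialLinearGroup.smul_def, coe_transvec hdot, add_smul,
      Matrix.smul_eq_mulVec, Matrix.vecMulVec_mulVec]
  refine ⟨transvec (Pi.single s 1 - u) (Pi.single s 1),
    ⟨transvec_single_right_mem (by simp [hu]) (by simp),
      mem_fixingOutside_iff.mpr fun j hj => ?_⟩, ?_⟩
  · have hsj : s ≠ j := fun h => hj (h ▸ hs)
    simp [hsmul, hsj]
  · simp [hsmul, hu]

lemma mem_elementarySubgroup_of_apply_self_eq_one {s : ι}
    (hT : fixingOutside R T ≤ elementarySubgroup ι ⊤) {A : Matrix.SpecialLinearGroup ι R}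
    (hA : A ∈ fixingOutside R (insert s T)) (hs : A.1 s s = 1) : A ∈ elementarySubgroup ι ⊤ := by
  obtain ⟨g, ⟨hgE, hgF⟩, hg⟩ := exists_smul_eq_single (T := insert s T)
    (u := A • (Pi.single s 1 : ι → R)) (Finset.mem_insert_self s T) (by rwa [smul_single_one_apply])
  have hgA : g * A ∈ fixingOutside R T := by
    refine mem_fixingOutside_iff.mpr fun j hj => ?_
    rcases eq_or_ne j s with rfl | hjs
    · rw [mul_smul, hg]
    · exact mem_fixingOutside_iff.mp (mul_mem hgF hA) j (by simp [hj, hjs])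
  exact ((elementarySubgroup ι ⊤).mul_mem_cancel_left hgE).mp (hT hgA)

lemma fixingOutside_empty : fixingOutside R (∅ : Finset ι) = ⊥ := by
  refine (Subgroup.eq_bot_iff_forall _).mpr fun A hA => ?_
  ext i j
  rw [← smul_single_one_apply, mem_fixingOutside_iff.mp hA j (Finset.notMem_empty j), coe_one,
    Matrix.one_apply, Pi.single_apply]

lemma apply_self_eq_one_of_mem_fixingOutside_singleton {s : ι}
    {A : Matrix.SpecialLinearGroup ι R} (hA : A ∈ fixingOutside R {s}) : A.1 s s = 1 := by
  have hcol : A.1 = Matrix.updateCol 1 s (fun i => A.1 i s) := by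
    ext i j
    rcases eq_or_ne j s with rfl | hj
    · simp
    · rw [← smul_single_one_apply, mem_fixingOutside_iff.mp hA j (by simpa using hj)]
      simp [hj, Matrix.one_apply, Pi.single_apply]
  have hdet := A.2
  rw [hcol, ← Matrix.cramer_apply, Matrix.cramer_one] at hdet
  exact hdet

lemma fixingOutside_singleton_le (s : ι) :
    fixingOutside R {s} ≤ elementarySubgroup ι (⊤ : Ideal R) := fun _ hA =>
  mem_elementarySubgroup_of_apply_self_eq_one (T := ∅) (by simp [fixingOutside_empty])
    (by simpa using hA) (apply_self_eq_one_of_mem_fixingOutside_singleton hA)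

lemma exists_smul_apply_eq_one {s t a : ι} (hs : s ∈ T) (ht : t ∈ T) (hst : s ≠ t) (ha : a ∈ T)
    {u : ι → R} (hu : IsUnit (u a)) :
    ∃ g ∈ elementarySubgroup ι ⊤ ⊓ fixingOutside R T, (g • u) s = 1 := by
  have hadd {i j : ι} (hij : i ≠ j) (hj : j ∈ T) {v : ι → R} (hv : IsUnit (v j)) :
      ∃ g ∈ elementarySubgroup ι ⊤ ⊓ fixingOutside R T, (g • v) i = 1 := by
    obtain ⟨b, hb⟩ := hv.exists_left_inv
    refine ⟨transvection hij ((1 - v i) * b), transvection_mem_inf_fixingOutside hij hj _, ?_⟩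
    simp [transvection_smul, mul_assoc, hb]
  rcases eq_or_ne s a with rfl | hsa
  · obtain ⟨g, hg, hgt⟩ := hadd hst.symm hs hu
    obtain ⟨h, hh, hhs⟩ := hadd hst ht (v := g • u) (by simp [hgt])
    exact ⟨h * g, mul_mem hh hg, by rwa [mul_smul]⟩
  · exact hadd hsa ha hu

lemma exists_dvd_of_euclideanDomain {R : Type*} [EuclideanDomain R] {T : Finset ι}
    (hT : T.Nonempty) (u : ι → R) :
    ∃ g ∈ elementarySubgroup ι (⊤ : Ideal R) ⊓ fixingOutside R T,
      ∃ a ∈ T, ∀ c ∈ T, (g • u) a ∣ (g • u) c := by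
  set H := elementarySubgroup ι (⊤ : Ideal R) ⊓ fixingOutside R T
  by_cases hzero : ∀ c ∈ T, u c = 0
  · obtain ⟨a, ha⟩ := hT
    exact ⟨1, one_mem H, a, ha, fun c hc => by simp [hzero c hc]⟩
  push Not at hzero
  obtain ⟨a₀, ha₀, hu₀⟩ := hzero
  obtain ⟨_, ⟨⟨g, hg, a, ha, rfl⟩, hne⟩, hmin⟩ := EuclideanDomain.r_wellFounded.has_min
    {x : R | (∃ g ∈ H, ∃ a ∈ T, (g • u) a = x) ∧ x ≠ 0}
    ⟨u a₀, ⟨1, one_mem H, a₀, ha₀, by rw [one_smul]⟩, hu₀⟩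
  refine ⟨g, hg, a, ha, fun c hc => ?_⟩
  rcases eq_or_ne c a with rfl | hca
  · rfl
  by_contra hdvd
  have hmod : (g • u) c % (g • u) a ≠ 0 := mt EuclideanDomain.mod_eq_zero.mp hdvd
  refine hmin ((g • u) c % (g • u) a) ⟨⟨transvection hca (-((g • u) c / (g • u) a)) * g,
    mul_mem (transvection_mem_inf_fixingOutside hca ha _) hg, c, hc, ?_⟩, hmod⟩
    (EuclideanDomain.mod_lt _ hne)
  rw [mul_smul, transvection_smul, EuclideanDomain.mod_eq_sub_mul_div]
  simp only [Pi.add_apply, Pi.single_eq_same]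
  ring

lemma fixingOutside_insert_le {R : Type*} [EuclideanDomain R] {T : Finset ι} (hT : T.Nonempty)
    {s : ι} (hs : s ∉ T) (h : fixingOutside R T ≤ elementarySubgroup ι ⊤) :
    fixingOutside R (insert s T) ≤ elementarySubgroup ι ⊤ := by
  intro A hA
  obtain ⟨t, ht⟩ := hT
  have hsmem := Finset.mem_insert_self s T
  have htmem := Finset.mem_insert_of_mem (b := s) ht
  obtain ⟨g, hg, a, ha, hdvd⟩ := exists_dvd_of_euclideanDomain ⟨s, hsmem⟩
    (A • (Pi.single s 1 : ι → R))
  have hgA : g * A ∈ fixingOutside R (insert s T) := mul_mem hg.2 hA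
  simp only [← mul_smul] at hdvd
  have hunit : IsUnit (((g * A) • (Pi.single s 1 : ι → R)) a) :=
    isUnit_of_forall_dvd hgA hsmem fun i hi => by
      simpa only [smul_single_one_apply] using hdvd i hi
  obtain ⟨k, hk, hks⟩ := exists_smul_apply_eq_one hsmem htmem (by grind) ha hunit
  rw [← mul_smul, smul_single_one_apply] at hks
  have := mem_elementarySubgroup_of_apply_self_eq_one h (mul_mem hk.2 hgA) hks
  rwa [Subgroup.mul_mem_cancel_left _ hk.1, Subgroup.mul_mem_cancel_left _ hg.1] at this

theorem elementarySubgroup_top_eq_top {R : Type*} [EuclideanDomain R] :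
    elementarySubgroup ι (⊤ : Ideal R) = ⊤ := by
  rcases isEmpty_or_nonempty ι with hι | hι
  · exact Subsingleton.elim _ _
  suffices ∀ T : Finset ι, T.Nonempty → fixingOutside R T ≤ elementarySubgroup ι ⊤ from
    top_unique fun A _ => this .univ Finset.univ_nonempty (mem_fixingOutside_iff.mpr (by simp))
  intro T hT
  induction hT using Finset.Nonempty.cons_induction with
  | singleton s => exact fixingOutside_singleton_le s
  | cons s T hs hT ih =>
    rw [Finset.cons_eq_insert]
    exact fixingOutside_insert_le hT hs ih

end EuclideanDomain

/-! ### Block decompositions -/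

lemma transvection_add {i j : ι} (hij : i ≠ j) (a b : R) :
    transvection hij (a + b) = transvection hij a * transvection hij b :=
  Subtype.ext (Matrix.transvection_mul_transvection_same i j hij a b).symm

section Parabolic

variable {κ : Type*} {β : ι → κ}

lemma elementarySubgroup_mul_self_le {I : Ideal R} {H : Subgroup (Matrix.SpecialLinearGroup ι R)}
    (hβ : ∃ i j, β i ≠ β j)
    (hH : ∀ (i j : ι) (hij : β i ≠ β j), ∀ a ∈ I, transvection (ne_of_apply_ne β hij) a ∈ H) :
    elementarySubgroup ι (I * I) ≤ H := by
  refine elementarySubgroup_le_iff.mpr fun i j hij c hc => ?_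
  rcases ne_or_eq (β i) (β j) with hβij | hβij
  · exact hH i j hβij c (Ideal.mul_le_left hc)
  obtain ⟨l, hl⟩ : ∃ l, β i ≠ β l := by
    by_contra! hconst
    obtain ⟨p, q, hpq⟩ := hβ
    exact hpq ((hconst p).symm.trans (hconst q))
  have hil : i ≠ l := ne_of_apply_ne β hl
  have hlj : l ≠ j := ne_of_apply_ne β (hβij ▸ hl.symm)
  induction hc using Submodule.mul_induction_on' with
  | mem_mul_mem a ha b hb =>
    rw [← commutatorElement_transvection hil hlj]
    exact H.commutator_le_self (Subgroup.commutator_mem_commutator (hH i l hl a ha)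
      (hH l j (hβij ▸ hl.symm) b hb))
  | add a _ b _ ha hb =>
    rw [transvection_add]
    exact mul_mem ha hb

/-- The matrices `1 + X` in the special linear group such that `k` divides all entries of `X` and
`X i j = 0` unless `r i j`. For the relation `β i < β j` given by a block decomposition `β`, these
form the group `U_Q⁺(kR)` of the parabolic subgroup `Q` with blocks `β`, and for `β j < β i` the
opposite group `U_Q⁻(kR)`. -/
def unipotentSet (r : ι → ι → Prop) [DecidableRel r] (k : R) :
    Set (Matrix.SpecialLinearGroup ι R) :=
  {g | ∀ i j : ι, if i = j then g.1 i j = 1 else if r i j then k ∣ g.1 i j else g.1 i j = 0}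

lemma transvection_mem_unipotentSet {r : ι → ι → Prop} [DecidableRel r] {i j : ι} (hij : i ≠ j)
    (hr : r i j) {k a : R} (ha : k ∣ a) : transvection hij a ∈ unipotentSet r k := by
  intro p q
  rw [transvection_coe, Matrix.add_apply, Matrix.one_apply, Matrix.single_apply]
  grind [dvd_zero]

lemma elementarySubgroup_le_closure_unipotentSet [LinearOrder κ] (hβ : ∃ i j, β i ≠ β j) (k : R) :
    elementarySubgroup ι (Ideal.span {k} * Ideal.span {k}) ≤
      Subgroup.closure (unipotentSet (fun i j => β i < β j) k ∪
        unipotentSet (fun i j => β j < β i) k) := by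
  refine elementarySubgroup_mul_self_le hβ fun i j hβij a ha => Subgroup.subset_closure ?_
  have hka : k ∣ a := Ideal.mem_span_singleton.mp ha
  exact hβij.lt_or_gt.imp (transvection_mem_unipotentSet _ · hka)
    (transvection_mem_unipotentSet _ · hka)

end Parabolic

end ParabolicUnipotent

open ParabolicUnipotent

theorem parabolic_unipotent_generators_finite_index_general {R ι κ : Type*} [EuclideanDomain R]
    [Ring.HasFiniteQuotients R] [Fintype ι] [DecidableEq ι] [LinearOrder κ]
    (hι : 3 ≤ Fintype.card ι) {β : ι → κ} (hβ : ∃ i j, β i ≠ β j) {k : R} (hk : k ≠ 0) :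
    (Subgroup.closure (unipotentSet (fun i j => β i < β j) k ∪
      unipotentSet (fun i j => β j < β i) k)).FiniteIndex := by
  set I := Ideal.span {k} * Ideal.span {k} with hI
  have hII : I * I ≠ ⊥ := by simp [hI, hk]
  have : Finite (R ⧸ I * I) := Ring.HasFiniteQuotients.finiteQuotient hII
  have := finiteIndex_elementarySubgroup hι elementarySubgroup_top_eq_top I
  exact Subgroup.finiteIndex_of_le (elementarySubgroup_le_closure_unipotentSet hβ k)

/-- For `n ≥ 3`, an ordered partition of `{1,…,n}` into `r ≥ 2` consecutive
blocks of positive sizes (encoded by a monotone surjection `β : Fin n → Fin r` whose fibres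
are the blocks `B₁,…,B_r`), and `k ≥ 1`: the subgroup of `SL_n(ℤ)` generated by `U_Q⁺(kℤ)`
(matrices `I + X` with `X i j = 0` unless `i ∈ B_s`, `j ∈ B_t` with `s < t`, entries of `X`
divisible by `k`) and the analogous `U_Q⁻(kℤ)` (with `s > t`) has finite index. -/
theorem parabolic_unipotent_generators_finite_index (n r k : ℕ)
    (hn : 3 ≤ n) (hr : 2 ≤ r) (hk : 1 ≤ k)
    (β : Fin n → Fin r) (hmono : Monotone β) (hsurj : Function.Surjective β) :
    (Subgroup.closure
      ({g : Matrix.SpecialLinearGroup (Fin n) ℤ |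
          ∀ i j : Fin n, if i = j then g.1 i j = 1
            else if β i < β j then (k : ℤ) ∣ g.1 i j
            else g.1 i j = 0} ∪
       {g : Matrix.SpecialLinearGroup (Fin n) ℤ |
          ∀ i j : Fin n, if i = j then g.1 i j = 1
            else if β j < β i then (k : ℤ) ∣ g.1 i j
            else g.1 i j = 0})).FiniteIndex := by
  have hβ : ∃ i j, β i ≠ β j := by
    obtain ⟨i, hi⟩ := hsurj ⟨0, by omega⟩
    obtain ⟨j, hj⟩ := hsurj ⟨1, by omega⟩
    exact ⟨i, j, by simp [hi, hj]⟩
  exact parabolic_unipotent_generators_finite_index_general (by simpa using hn) hβ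
    (Nat.cast_ne_zero.mpr (Nat.one_le_iff_ne_zero.mp hk))
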